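/- arXiv:2507.16599 — 2 statements merged into one kernel-verified Lean document; each statement's English description precedes it below -/
import Mathlib

section
/- Let d ≥ 3 and let μ be a Borel probability measure on 𝕋^d such that ∫|u|² dμ ≤ C ∫|u|² dx for all Laplace eigenfunctions u. Then μ is upper (d-2)-regular: there exists a constant C' such that μ(B_r(x₀)) ≤ C' r^{d-2} for all x₀ ∈ 𝕋^d and r ∈ (0,1). -/
open MeasureTheory Complex

/-- The character `x ↦ e^{2πi k·x}` on the torus `𝕋^d = (ℝ/ℤ)^d`. -/
noncomputable def torusChar {d : ℕ} (k : Fin d → ℤ) (x : Fin d → AddCircle (1:ℝ)) : ℂ :=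
  ∏ i, fourier (k i) (x i)

/-- The set of lattice points `k ∈ ℤ^d` with `|k|² = n`. -/
noncomputable def sphereFinset (d n : ℕ) : Finset (Fin d → ℤ) :=
  Finset.filter (fun k => ∑ i, (k i)^2 = (n : ℤ))
    (Finset.Icc (fun _ => -(n : ℤ)) (fun _ => (n : ℤ)))

/-- A Laplace eigenfunction on `𝕋^d` with eigenvalue `-4π²n`:
a trigonometric polynomial with frequencies on the sphere `|k|² = n`. -/
noncomputable def eigenfun {d : ℕ} (n : ℕ) (c : (Fin d → ℤ) → ℂ)
    (x : Fin d → AddCircle (1:ℝ)) : ℂ :=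
  ∑ k ∈ sphereFinset d n, c k * torusChar k x

/-- The Fourier coefficient `μ̂(k) = ∫ e^{-2πi k·x} dμ(x)` of a measure on the torus. -/
noncomputable def fourierCoeff' {d : ℕ} (μ : Measure (Fin d → AddCircle (1:ℝ)))
    (k : Fin d → ℤ) : ℂ :=
  ∫ x, (starRingEnd ℂ) (torusChar k x) ∂μ

/-!
Fix `x₀` and test the trace inequality against the eigenfunction `∑ k, e^{2πi k·(x - x₀)}`, summed
over the `N` lattice points with `|k|² = n`. All its terms lie within `1/2` of `1` as soon as
`|x - x₀| ≲ n^{-1/2}`, so there it has modulus at least `N / 2`, while its squared `L²` norm is only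
`N`; by Chebyshev's inequality a ball of radius `r ≲ n^{-1/2}` has measure at most `4C / N`. Among
the `≲ R²` spheres that cover a box of side `R ∼ 1 / r`, the richest one carries
`N ≳ R^d / R² ∼ r^{-(d-2)}` lattice points.
-/

open scoped Real

section Orthonormal

variable {𝕜 X ι : Type*} [RCLike 𝕜] [TopologicalSpace X] [CompactSpace X] [MeasurableSpace X]
  [BorelSpace X] {μ : Measure X} [IsFiniteMeasure μ]

theorem integral_norm_sq_eq_norm_toLp_sq (f : C(X, 𝕜)) :
    ∫ x, ‖f x‖ ^ 2 ∂μ = ‖ContinuousMap.toLp 2 μ 𝕜 f‖ ^ 2 := by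
  have h := inner_self_eq_norm_sq_to_K (𝕜 := 𝕜) (ContinuousMap.toLp 2 μ 𝕜 f)
  simp only [ContinuousMap.inner_toLp, RCLike.mul_conj, ← RCLike.ofReal_pow, integral_ofReal] at h
  exact RCLike.ofReal_injective h

theorem integral_norm_sq_sum_of_orthonormal {f : ι → C(X, 𝕜)}
    (hf : Orthonormal 𝕜 fun i ↦ ContinuousMap.toLp 2 μ 𝕜 (f i)) (s : Finset ι) (c : ι → 𝕜) :
    ∫ x, ‖∑ i ∈ s, c i * f i x‖ ^ 2 ∂μ = ∑ i ∈ s, ‖c i‖ ^ 2 := by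
  have h := (inner_self_eq_norm_sq_to_K (𝕜 := 𝕜) _).symm.trans (hf.inner_sum c c s)
  simp only [RCLike.conj_mul, ← RCLike.ofReal_pow, ← RCLike.ofReal_sum] at h
  calc ∫ x, ‖∑ i ∈ s, c i * f i x‖ ^ 2 ∂μ
      = ‖∑ i ∈ s, c i • ContinuousMap.toLp 2 μ 𝕜 (f i)‖ ^ 2 := by
        simpa [ContinuousMap.sum_apply] using
          integral_norm_sq_eq_norm_toLp_sq (μ := μ) (∑ i ∈ s, c i • f i)
    _ = ∑ i ∈ s, ‖c i‖ ^ 2 := RCLike.ofReal_injective h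

end Orthonormal

theorem abs_sum_mul_le_sqrt_mul_norm {ι : Type*} [Fintype ι] (a t : ι → ℝ) :
    |∑ i, a i * t i| ≤ √(Fintype.card ι * ∑ i, a i ^ 2) * ‖t‖ := by
  have hsum : ∑ i, t i ^ 2 ≤ Fintype.card ι * ‖t‖ ^ 2 := by
    calc ∑ i, t i ^ 2 ≤ ∑ _i : ι, ‖t‖ ^ 2 :=
          Finset.sum_le_sum fun i _ ↦ sq_le_sq' (neg_le_of_abs_le (norm_le_pi_norm t i))
            (le_of_abs_le (norm_le_pi_norm t i))
      _ = Fintype.card ι * ‖t‖ ^ 2 := by simp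
  rw [← Real.sqrt_sq (norm_nonneg t), ← Real.sqrt_mul (by positivity)]
  refine Real.abs_le_sqrt ?_
  calc (∑ i, a i * t i) ^ 2 ≤ (∑ i, a i ^ 2) * ∑ i, t i ^ 2 :=
        Finset.sum_mul_sq_le_sq_mul_sq _ _ _
    _ ≤ (∑ i, a i ^ 2) * (Fintype.card ι * ‖t‖ ^ 2) := by gcongr
    _ = Fintype.card ι * (∑ i, a i ^ 2) * ‖t‖ ^ 2 := by ring

theorem exists_coe_addCircle_eq_and_abs_eq_norm {p : ℝ} (x : AddCircle p) :
    ∃ t : ℝ, (t : AddCircle p) = x ∧ |t| = ‖x‖ := by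
  induction x using QuotientAddGroup.induction_on with
  | H t =>
    refine ⟨t - round (p⁻¹ * t) * p, ?_, (AddCircle.norm_eq p).symm⟩
    rw [AddCircle.coe_sub, sub_eq_self, AddCircle.coe_eq_zero_iff]
    exact ⟨round (p⁻¹ * t), by simp⟩

theorem volume_eq_pi_haarAddCircle {ι : Type*} [Fintype ι] :
    (volume : Measure (ι → AddCircle (1 : ℝ))) = Measure.pi fun _ ↦ AddCircle.haarAddCircle := by
  simp [volume_pi, AddCircle.volume_eq_smul_haarAddCircle]

section Torus

variable {d : ℕ}

theorem norm_torusChar (k : Fin d → ℤ) (x : Fin d → AddCircle (1 : ℝ)) : ‖torusChar k x‖ = 1 := by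
  simp only [torusChar, norm_prod, fourier_apply, Circle.norm_coe, Finset.prod_const_one]

theorem torusChar_add (k : Fin d → ℤ) (x y : Fin d → AddCircle (1 : ℝ)) :
    torusChar k (x + y) = torusChar k x * torusChar k y := by
  simp [torusChar, ← Finset.prod_mul_distrib, fourier_apply, smul_add, AddCircle.toCircle_add]

theorem torusChar_coe (k : Fin d → ℤ) (t : Fin d → ℝ) :
    torusChar k (fun i ↦ (t i : AddCircle (1 : ℝ))) =
      exp (I * (2 * π * ∑ i, k i * t i : ℝ)) := by
  simp only [torusChar, fourier_coe_apply, ← exp_sum]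
  push_cast
  simp only [Finset.mul_sum]
  congr! 2 with i
  ring

theorem norm_torusChar_sub_one_le (k : Fin d → ℤ) (x : Fin d → AddCircle (1 : ℝ)) :
    ‖torusChar k x - 1‖ ≤ 2 * π * √(d * ∑ i, (k i : ℝ) ^ 2) * ‖x‖ := by
  choose t htx ht using fun i ↦ exists_coe_addCircle_eq_and_abs_eq_norm (x i)
  have hx : x = fun i ↦ (t i : AddCircle (1 : ℝ)) := funext fun i ↦ (htx i).symm
  have hnorm : ‖t‖ ≤ ‖x‖ :=
    (pi_norm_le_iff_of_nonneg (norm_nonneg x)).mpr fun i ↦ (ht i).trans_le (norm_le_pi_norm x i)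
  have hphase : |∑ i, k i * t i| ≤ √(d * ∑ i, (k i : ℝ) ^ 2) * ‖t‖ := by
    simpa only [Fintype.card_fin] using abs_sum_mul_le_sqrt_mul_norm (fun i ↦ (k i : ℝ)) t
  calc ‖torusChar k x - 1‖ ≤ ‖2 * π * ∑ i, k i * t i‖ := by
        conv_lhs => rw [hx, torusChar_coe]
        exact Real.norm_exp_I_mul_ofReal_sub_one_le
    _ = 2 * π * |∑ i, k i * t i| := by
        rw [Real.norm_eq_abs, abs_mul, abs_of_pos Real.two_pi_pos]
    _ ≤ 2 * π * (√(d * ∑ i, (k i : ℝ) ^ 2) * ‖x‖) := by grw [hphase, hnorm]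
    _ = 2 * π * √(d * ∑ i, (k i : ℝ) ^ 2) * ‖x‖ := (mul_assoc _ _ _).symm

theorem continuous_eigenfun (n : ℕ) (c : (Fin d → ℤ) → ℂ) : Continuous (eigenfun (d := d) n c) := by
  unfold eigenfun torusChar
  fun_prop

theorem integral_norm_sq_eigenfun (n : ℕ) (c : (Fin d → ℤ) → ℂ) :
    ∫ x : Fin d → AddCircle (1 : ℝ), ‖eigenfun n c x‖ ^ 2 = ∑ k ∈ sphereFinset d n, ‖c k‖ ^ 2 := by
  rw [volume_eq_pi_haarAddCircle]
  exact integral_norm_sq_sum_of_orthonormal (μ := Measure.pi fun _ ↦ AddCircle.haarAddCircle)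
    UnitAddTorus.orthonormal_mFourier _ c

theorem mem_sphereFinset {n : ℕ} {k : Fin d → ℤ} :
    k ∈ sphereFinset d n ↔ ∑ i, k i ^ 2 = (n : ℤ) := by
  refine ⟨fun hk ↦ (Finset.mem_filter.mp hk).2, fun hk ↦ Finset.mem_filter.mpr ⟨?_, hk⟩⟩
  have habs (i : Fin d) : |k i| ≤ n :=
    calc |k i| ≤ k i ^ 2 := by rw [← sq_abs]; exact Int.le_self_sq _
      _ ≤ ∑ i, k i ^ 2 :=
          Finset.single_le_sum (f := fun i ↦ k i ^ 2) (fun _ _ ↦ sq_nonneg _) (Finset.mem_univ i)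
      _ = n := hk
  exact Finset.mem_Icc.mpr ⟨fun i ↦ (abs_le.mp (habs i)).1, fun i ↦ (abs_le.mp (habs i)).2⟩

theorem piFinset_Icc_subset_biUnion_sphereFinset (d M : ℕ) :
    Fintype.piFinset (fun _ : Fin d ↦ Finset.Icc (0 : ℤ) M) ⊆
      (Finset.range (d * M ^ 2 + 1)).biUnion (sphereFinset d) := by
  intro k hk
  have hk' (i : Fin d) : 0 ≤ k i ∧ k i ≤ M := Finset.mem_Icc.mp (Fintype.mem_piFinset.mp hk i)
  have hle : ∑ i, k i ^ 2 ≤ ((d * M ^ 2 : ℕ) : ℤ) :=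
    calc ∑ i, k i ^ 2 ≤ ∑ _i : Fin d, (M : ℤ) ^ 2 :=
          Finset.sum_le_sum fun i _ ↦ pow_le_pow_left₀ (hk' i).1 (hk' i).2 2
      _ = ((d * M ^ 2 : ℕ) : ℤ) := by simp
  obtain ⟨n, hn⟩ := Int.eq_ofNat_of_zero_le
    (Finset.sum_nonneg fun i _ ↦ sq_nonneg (k i) : 0 ≤ ∑ i, k i ^ 2)
  exact Finset.mem_biUnion.mpr ⟨n, Finset.mem_range.mpr (by omega), mem_sphereFinset.mpr hn⟩

theorem exists_pow_le_mul_card_sphereFinset (d M : ℕ) :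
    ∃ n ≤ d * M ^ 2, (M + 1) ^ d ≤ (d * M ^ 2 + 1) * (sphereFinset d n).card := by
  obtain ⟨n, hn, hmax⟩ := Finset.exists_max_image (Finset.range (d * M ^ 2 + 1))
    (fun n ↦ (sphereFinset d n).card) Finset.nonempty_range_add_one
  refine ⟨n, Finset.mem_range_succ_iff.mp hn, ?_⟩
  calc (M + 1) ^ d = (Fintype.piFinset fun _ : Fin d ↦ Finset.Icc (0 : ℤ) M).card := by simp
    _ ≤ ((Finset.range (d * M ^ 2 + 1)).biUnion (sphereFinset d)).card :=
        Finset.card_le_card (piFinset_Icc_subset_biUnion_sphereFinset d M)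
    _ ≤ (Finset.range (d * M ^ 2 + 1)).card * (sphereFinset d n).card :=
        Finset.card_biUnion_le_card_mul _ _ _ hmax
    _ = (d * M ^ 2 + 1) * (sphereFinset d n).card := by rw [Finset.card_range]

theorem exists_pow_sub_two_le_mul_card_sphereFinset (hd : 2 ≤ d) {R : ℝ} (hR : 0 ≤ R) :
    ∃ n : ℕ, n ≤ d * R ^ 2 ∧ R ^ (d - 2) ≤ d * (sphereFinset d n).card := by
  obtain ⟨n, hn, hcard⟩ := exists_pow_le_mul_card_sphereFinset d ⌊R⌋₊
  refine ⟨n, ?_, ?_⟩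
  · calc (n : ℝ) ≤ d * ⌊R⌋₊ ^ 2 := by exact_mod_cast hn
      _ ≤ d * R ^ 2 := by gcongr; exact Nat.floor_le hR
  · have hle : (⌊R⌋₊ + 1) ^ (d - 2) ≤ d * (sphereFinset d n).card := by
      refine Nat.le_of_mul_le_mul_left ?_ (by positivity : 0 < (⌊R⌋₊ + 1) ^ 2)
      calc (⌊R⌋₊ + 1) ^ 2 * (⌊R⌋₊ + 1) ^ (d - 2) = (⌊R⌋₊ + 1) ^ d := by
            rw [← pow_add, Nat.add_sub_cancel' hd]
        _ ≤ (d * ⌊R⌋₊ ^ 2 + 1) * (sphereFinset d n).card := hcard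
        _ ≤ ((⌊R⌋₊ + 1) ^ 2 * d) * (sphereFinset d n).card := by
            gcongr
            nlinarith [Nat.zero_le (d * ⌊R⌋₊)]
        _ = (⌊R⌋₊ + 1) ^ 2 * (d * (sphereFinset d n).card) := mul_assoc _ _ _
    calc R ^ (d - 2) ≤ (⌊R⌋₊ + 1 : ℝ) ^ (d - 2) := by gcongr; exact (Nat.lt_floor_add_one R).le
      _ ≤ d * (sphereFinset d n).card := by exact_mod_cast hle

/-- Bourgain's eigenfunction `∑_{|k|² = n} e^{2πi k·(x - x₀)}`, which peaks at `x₀`. The paper's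
`φ_{λ,x₀}` is the case `λ = √n`. -/
noncomputable def bourgainEigenfun (n : ℕ) (x₀ x : Fin d → AddCircle (1 : ℝ)) : ℂ :=
  ∑ k ∈ sphereFinset d n, torusChar k (x - x₀)

theorem bourgainEigenfun_eq_eigenfun (n : ℕ) (x₀ : Fin d → AddCircle (1 : ℝ)) :
    bourgainEigenfun n x₀ = eigenfun n fun k ↦ torusChar k (-x₀) := by
  funext x
  simp only [bourgainEigenfun, eigenfun, ← torusChar_add, neg_add_eq_sub]

theorem continuous_bourgainEigenfun (n : ℕ) (x₀ : Fin d → AddCircle (1 : ℝ)) :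
    Continuous (bourgainEigenfun n x₀) :=
  bourgainEigenfun_eq_eigenfun n x₀ ▸ continuous_eigenfun n _

theorem integral_norm_sq_bourgainEigenfun (n : ℕ) (x₀ : Fin d → AddCircle (1 : ℝ)) :
    ∫ x, ‖bourgainEigenfun n x₀ x‖ ^ 2 = (sphereFinset d n).card := by
  simp [bourgainEigenfun_eq_eigenfun, integral_norm_sq_eigenfun, norm_torusChar]

theorem norm_bourgainEigenfun_sub_card_le (n : ℕ) (x₀ x : Fin d → AddCircle (1 : ℝ)) :
    ‖bourgainEigenfun n x₀ x - (sphereFinset d n).card‖ ≤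
      (sphereFinset d n).card * (2 * π * √(d * n) * dist x x₀) := by
  have hterm : ∀ k ∈ sphereFinset d n,
      ‖torusChar k (x - x₀) - 1‖ ≤ 2 * π * √(d * n) * dist x x₀ := by
    intro k hk
    have hk' : ∑ i, (k i : ℝ) ^ 2 = n := by exact_mod_cast mem_sphereFinset.mp hk
    simpa only [hk', dist_eq_norm] using norm_torusChar_sub_one_le k (x - x₀)
  calc ‖bourgainEigenfun n x₀ x - (sphereFinset d n).card‖
      = ‖∑ k ∈ sphereFinset d n, (torusChar k (x - x₀) - 1)‖ := by simp [bourgainEigenfun]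
    _ ≤ ∑ _k ∈ sphereFinset d n, 2 * π * √(d * n) * dist x x₀ := norm_sum_le_of_le _ hterm
    _ = (sphereFinset d n).card * (2 * π * √(d * n) * dist x x₀) := by
        rw [Finset.sum_const, nsmul_eq_mul]

theorem card_div_two_le_norm_bourgainEigenfun {n : ℕ} {x₀ x : Fin d → AddCircle (1 : ℝ)}
    (hx : 2 * π * √(d * n) * dist x x₀ ≤ 1 / 2) :
    ((sphereFinset d n).card / 2 : ℝ) ≤ ‖bourgainEigenfun n x₀ x‖ := by
  have hclose : ‖bourgainEigenfun n x₀ x - (sphereFinset d n).card‖ ≤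
      (sphereFinset d n).card * (1 / 2) :=
    (norm_bourgainEigenfun_sub_card_le n x₀ x).trans (by gcongr)
  have htriangle := norm_sub_norm_le ((sphereFinset d n).card : ℂ) (bourgainEigenfun n x₀ x)
  rw [norm_sub_rev, norm_natCast] at htriangle
  linarith

theorem measureReal_ball_mul_card_le {μ : Measure (Fin d → AddCircle (1 : ℝ))} [IsFiniteMeasure μ]
    {C r : ℝ} {n : ℕ} {x₀ : Fin d → AddCircle (1 : ℝ)} (hn : (sphereFinset d n).Nonempty)
    (htrace : ∫ x, ‖bourgainEigenfun n x₀ x‖ ^ 2 ∂μ ≤ C * ∫ x, ‖bourgainEigenfun n x₀ x‖ ^ 2)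
    (hr : 2 * π * √(d * n) * r ≤ 1 / 2) :
    μ.real (Metric.ball x₀ r) * (sphereFinset d n).card ≤ 4 * C := by
  set N : ℝ := ((sphereFinset d n).card : ℝ)
  have hN : 0 < N := Nat.cast_pos.mpr hn.card_pos
  have hsub : Metric.ball x₀ r ⊆ {x | (N / 2) ^ 2 ≤ ‖bourgainEigenfun n x₀ x‖ ^ 2} := by
    intro x hx
    have hpeak : N / 2 ≤ ‖bourgainEigenfun n x₀ x‖ :=
      card_div_two_le_norm_bourgainEigenfun
        (le_trans (by gcongr; exact (Metric.mem_ball.mp hx).le) hr)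
    exact pow_le_pow_left₀ (by positivity) hpeak 2
  have hint : Integrable (fun x ↦ ‖bourgainEigenfun n x₀ x‖ ^ 2) μ :=
    ((continuous_bourgainEigenfun n x₀).norm.pow 2).integrable_of_hasCompactSupport
      (HasCompactSupport.of_compactSpace _)
  have hchebyshev : (N / 2) ^ 2 * μ.real (Metric.ball x₀ r) ≤ C * N :=
    calc (N / 2) ^ 2 * μ.real (Metric.ball x₀ r)
        ≤ (N / 2) ^ 2 * μ.real {x | (N / 2) ^ 2 ≤ ‖bourgainEigenfun n x₀ x‖ ^ 2} := by
          gcongr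
          exact measure_ne_top _ _
      _ ≤ ∫ x, ‖bourgainEigenfun n x₀ x‖ ^ 2 ∂μ :=
          mul_meas_ge_le_integral_of_nonneg (.of_forall fun _ ↦ by positivity) hint _
      _ ≤ C * N := by rwa [integral_norm_sq_bourgainEigenfun] at htrace
  refine le_of_mul_le_mul_left ?_ hN
  linarith

end Torus

theorem stmt_8_general {d : ℕ} (hd : 2 ≤ d) (μ : Measure (Fin d → AddCircle (1 : ℝ)))
    [IsFiniteMeasure μ] {C : ℝ}
    (htrace : ∀ (n : ℕ) (x₀ : Fin d → AddCircle (1 : ℝ)),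
      ∫ x, ‖bourgainEigenfun n x₀ x‖ ^ 2 ∂μ ≤ C * ∫ x, ‖bourgainEigenfun n x₀ x‖ ^ 2)
    (x₀ : Fin d → AddCircle (1 : ℝ)) {r : ℝ} (hr : 0 < r) :
    μ (Metric.ball x₀ r) ≤ ENNReal.ofReal (4 * C * d * (4 * π * d) ^ (d - 2) * r ^ (d - 2)) := by
  have hd0 : (0 : ℝ) < d := by exact_mod_cast (by omega : 0 < d)
  set R : ℝ := (4 * π * d * r)⁻¹ with hR
  have hR0 : 0 < R := by positivity
  obtain ⟨n, hn, hcard⟩ := exists_pow_sub_two_le_mul_card_sphereFinset hd hR0.le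
  have hnonempty : (sphereFinset d n).Nonempty := by
    have hpos := (pow_pos hR0 (d - 2)).trans_le hcard
    exact Finset.card_pos.mp (Nat.cast_pos.mp (pos_of_mul_pos_right hpos hd0.le))
  have hsqrt : √(d * n) ≤ d * R :=
    Real.sqrt_le_iff.mpr ⟨by positivity, by nlinarith⟩
  have hsmall : 2 * π * √(d * n) * r ≤ 1 / 2 :=
    calc 2 * π * √(d * n) * r ≤ 2 * π * (d * R) * r := by gcongr
      _ = 1 / 2 := by rw [hR]; field_simp; norm_num
  have hball := measureReal_ball_mul_card_le hnonempty (htrace n x₀) hsmall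
  rw [← ofReal_measureReal]
  refine ENNReal.ofReal_le_ofReal ?_
  calc μ.real (Metric.ball x₀ r)
      = μ.real (Metric.ball x₀ r) * R ^ (d - 2) * (4 * π * d * r) ^ (d - 2) := by
        rw [mul_assoc, ← mul_pow, hR, inv_mul_cancel₀ (by positivity), one_pow, mul_one]
    _ ≤ μ.real (Metric.ball x₀ r) * (d * (sphereFinset d n).card) * (4 * π * d * r) ^ (d - 2) := by
        gcongr
    _ = μ.real (Metric.ball x₀ r) * (sphereFinset d n).card * (d * (4 * π * d * r) ^ (d - 2)) := by
        ring
    _ ≤ 4 * C * (d * (4 * π * d * r) ^ (d - 2)) := by gcongr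
    _ = 4 * C * d * (4 * π * d) ^ (d - 2) * r ^ (d - 2) := by rw [mul_pow]; ring

/-- Necessary condition for the trace inequality: for `d ≥ 3`, if a Borel probability
measure `μ` on `𝕋^d` satisfies the trace inequality, then `μ` is upper `(d-2)`-regular:
`μ(B_r(x₀)) ≤ C' r^{d-2}` for all `x₀` and `r ∈ (0,1)`. -/
theorem stmt_8 {d : ℕ} (hd : 3 ≤ d) (μ : Measure (Fin d → AddCircle (1:ℝ)))
    [IsProbabilityMeasure μ] (C : ℝ)
    (htrace : ∀ (n : ℕ) (c : (Fin d → ℤ) → ℂ),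
      ∫ x, ‖eigenfun n c x‖ ^ 2 ∂μ ≤ C * ∫ x, ‖eigenfun n c x‖ ^ 2) :
    ∃ C' : ℝ, ∀ (x₀ : Fin d → AddCircle (1:ℝ)) (r : ℝ), r ∈ Set.Ioo (0:ℝ) 1 →
      μ (Metric.ball x₀ r) ≤ ENNReal.ofReal (C' * r ^ (d - 2)) :=
  ⟨_, fun x₀ _ hr ↦ stmt_8_general (by omega) μ
    (fun n y ↦ bourgainEigenfun_eq_eigenfun n y ▸ htrace n _) x₀ hr.1⟩
end

section
/- Let α ∈ (0, 1/3) and let 𝒞_α ⊂ [0,1] be the fat Cantor set obtained by iteratively removing, at step n+1, the middle open interval of length α^{n+1} from each of the 2^n closed intervals of the previous generation. Then for every ε ∈ (0, 1 + ln 2/ln α), the characteristic function of 𝒞_α belongs to W^{ε,1}(0,1): the Gagliardo seminorm ∫₀¹∫₀¹ |𝟙_{𝒞_α}(x) - 𝟙_{𝒞_α}(y)|/|x-y|^{1+ε} dx dy is finite. -/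
/-!
The seminorm of an indicator function `𝟙_s` on `Ω` is twice the interaction energy
`∫_{Ω ∩ s} ∫_{Ω \ s} |x - y|^{-1-ε}`. The energy is countably subadditive, so if intervals `I_i`
disjoint from `s` cover `Ω \ s`, it is at most the sum of the energies between `I_i` and its
complement, each of which is a constant times `|I_i|^{1-ε}`. At generation `n` the Cantor
construction has at most `2 ^ n` gaps of length `α ^ (n + 1)`, and `ε < 1 + log 2 / log α` says
exactly that `2 * α ^ (1 - ε) < 1`, so the sum is dominated by a convergent geometric series.
-/

/-- Lengths of the generation-`n` intervals in the fat Cantor construction with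
parameter `α`: `ℓ₀ = 1`, `ℓ_{n+1} = (ℓ_n - α^{n+1})/2`. -/
noncomputable def cantorLen (α : ℝ) : ℕ → ℝ
  | 0 => 1
  | n + 1 => (cantorLen α n - α ^ (n + 1)) / 2

/-- Left endpoints of the generation-`n` intervals in the fat Cantor construction. -/
noncomputable def cantorLeft (α : ℝ) : ℕ → Set ℝ
  | 0 => {0}
  | n + 1 => cantorLeft α n ∪
      (fun a => a + cantorLen α n - cantorLen α (n + 1)) '' cantorLeft α n

/-- The fat Cantor set with parameter `α`: the intersection over `n` of the unions of
the generation-`n` closed intervals. -/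
noncomputable def fatCantor (α : ℝ) : Set ℝ :=
  ⋂ n : ℕ, ⋃ a ∈ cantorLeft α n, Set.Icc a (a + cantorLen α n)

open MeasureTheory Set
open scoped ENNReal

section Gagliardo

/-- The Gagliardo `W^{ε,1}` seminorm of `f` on `Ω ⊆ ℝ`, with values in `[0, ∞]`. -/
noncomputable def gagliardoSeminorm (ε : ℝ) (Ω : Set ℝ) (f : ℝ → ℝ) : ℝ≥0∞ :=
  ∫⁻ x in Ω, ∫⁻ y in Ω, ENNReal.ofReal (|f x - f y| / |x - y| ^ (1 + ε))

/-- The interaction energy of two sets for the kernel `|x - y|^{-1-ε}`; with `B = Aᶜ` it is the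
`ε`-fractional perimeter of `A`. -/
noncomputable def fractionalInteraction (ε : ℝ) (A B : Set ℝ) : ℝ≥0∞ :=
  ∫⁻ x in A, ∫⁻ y in B, ENNReal.ofReal (|x - y| ^ (1 + ε))⁻¹

variable {ε : ℝ}

lemma fractionalInteraction_comm (ε : ℝ) (A B : Set ℝ) :
    fractionalInteraction ε A B = fractionalInteraction ε B A := by
  unfold fractionalInteraction
  rw [lintegral_lintegral_swap (by fun_prop)]
  simp only [abs_sub_comm]

lemma fractionalInteraction_mono {A A' B B' : Set ℝ} (hA : A ⊆ A') (hB : B ⊆ B') :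
    fractionalInteraction ε A B ≤ fractionalInteraction ε A' B' :=
  (lintegral_mono_set hA).trans (lintegral_mono fun _ ↦ lintegral_mono_set hB)

lemma fractionalInteraction_iUnion_left_le {ι : Type*} [Countable ι] (A : ι → Set ℝ) (B : Set ℝ) :
    fractionalInteraction ε (⋃ i, A i) B ≤ ∑' i, fractionalInteraction ε (A i) B :=
  lintegral_iUnion_le _ _

lemma fractionalInteraction_neg_neg (ε : ℝ) (A B : Set ℝ) :
    fractionalInteraction ε (-A) (-B) = fractionalInteraction ε A B := by
  have reflect (s : Set ℝ) (f : ℝ → ℝ≥0∞) : ∫⁻ x in -s, f (-x) = ∫⁻ x in s, f x :=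
    (Measure.measurePreserving_neg volume).setLIntegral_comp_preimage_emb
      (MeasurableEquiv.neg ℝ).measurableEmbedding f s
  unfold fractionalInteraction
  rw [← reflect A]
  refine lintegral_congr fun x ↦ ?_
  rw [← reflect B]
  simp only [neg_sub_neg, abs_sub_comm]

lemma gagliardoSeminorm_indicator_one {s Ω : Set ℝ} (hs : MeasurableSet s)
    (hΩ : MeasurableSet Ω) :
    gagliardoSeminorm ε Ω (s.indicator fun _ ↦ 1) =
      2 * fractionalInteraction ε (Ω ∩ s) (Ω \ s) := by
  have inner_of_mem : ∀ x ∈ Ω ∩ s,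
      ∫⁻ y in Ω, ENNReal.ofReal
        (|s.indicator (fun _ ↦ (1 : ℝ)) x - s.indicator (fun _ ↦ 1) y| / |x - y| ^ (1 + ε)) =
      ∫⁻ y in Ω \ s, ENNReal.ofReal (|x - y| ^ (1 + ε))⁻¹ := by
    intro x hx
    rw [← lintegral_inter_add_sdiff _ Ω hs,
      setLIntegral_eq_zero (hΩ.inter hs) fun y hy ↦ by simp [hx.2, hy.2], zero_add]
    exact setLIntegral_congr_fun (hΩ.diff hs) fun y hy ↦ by simp [hx.2, hy.2]
  have inner_of_notMem : ∀ x ∈ Ω \ s,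
      ∫⁻ y in Ω, ENNReal.ofReal
        (|s.indicator (fun _ ↦ (1 : ℝ)) x - s.indicator (fun _ ↦ 1) y| / |x - y| ^ (1 + ε)) =
      ∫⁻ y in Ω ∩ s, ENNReal.ofReal (|x - y| ^ (1 + ε))⁻¹ := by
    intro x hx
    rw [← lintegral_inter_add_sdiff _ Ω hs,
      setLIntegral_eq_zero (hΩ.diff hs) fun y hy ↦ by simp [hx.2, hy.2], add_zero]
    exact setLIntegral_congr_fun (hΩ.inter hs) fun y hy ↦ by simp [hx.2, hy.2]
  calc gagliardoSeminorm ε Ω (s.indicator fun _ ↦ 1)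
      = fractionalInteraction ε (Ω ∩ s) (Ω \ s) + fractionalInteraction ε (Ω \ s) (Ω ∩ s) := by
        rw [gagliardoSeminorm, ← lintegral_inter_add_sdiff _ Ω hs,
          setLIntegral_congr_fun (hΩ.inter hs) inner_of_mem,
          setLIntegral_congr_fun (hΩ.diff hs) inner_of_notMem]
        rfl
    _ = 2 * fractionalInteraction ε (Ω ∩ s) (Ω \ s) := by
        rw [fractionalInteraction_comm ε (Ω \ s), two_mul]

lemma lintegral_Ici_inv_abs_sub_rpow {x d : ℝ} (hε : 0 < ε) (hxd : x < d) :
    ∫⁻ y in Ici d, ENNReal.ofReal (|x - y| ^ (1 + ε))⁻¹ =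
      ENNReal.ofReal ((d - x) ^ (-ε) / ε) := by
  have translate : ∫⁻ y in Ici d, ENNReal.ofReal (|x - y| ^ (1 + ε))⁻¹ =
      ∫⁻ t in Ioi (d - x), ENNReal.ofReal (t ^ (-(1 + ε))) := by
    rw [setLIntegral_congr Ioi_ae_eq_Ici.symm,
      ← (measurePreserving_sub_right volume x).setLIntegral_comp_preimage_emb
        (MeasurableEquiv.subRight x).measurableEmbedding _ (Ioi (d - x)),
      preimage_sub_const_Ioi, sub_add_cancel]
    refine setLIntegral_congr_fun measurableSet_Ioi fun y hy ↦ ?_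
    have hxy : 0 < y - x := sub_pos.2 (hxd.trans hy)
    simp only [abs_sub_comm x, abs_of_pos hxy, Real.rpow_neg hxy.le]
  have hdx : 0 < d - x := sub_pos.2 hxd
  rw [translate, ← ofReal_integral_eq_lintegral_ofReal
      (integrableOn_Ioi_rpow_of_lt (by linarith) hdx)
      (ae_restrict_of_forall_mem measurableSet_Ioi fun t ht ↦ Real.rpow_nonneg (hdx.trans ht).le _),
    integral_Ioi_rpow_of_lt (by linarith) hdx, show -(1 + ε) + 1 = -ε by ring, neg_div_neg_eq]

lemma lintegral_Ioo_sub_rpow_neg_div {c d : ℝ} (hε : 0 < ε) (hε1 : ε < 1) (hcd : c ≤ d) :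
    ∫⁻ x in Ioo c d, ENNReal.ofReal ((d - x) ^ (-ε) / ε) =
      ENNReal.ofReal ((d - c) ^ (1 - ε) / (ε * (1 - ε))) := by
  have hint : IntervalIntegrable (fun x ↦ (d - x) ^ (-ε) / ε) volume c d := by
    simpa using ((intervalIntegral.intervalIntegrable_rpow' (a := d - c) (b := 0)
      (r := -ε) (by linarith)).comp_sub_left d).div_const ε
  have heval : ∫ x in c..d, (d - x) ^ (-ε) / ε = (d - c) ^ (1 - ε) / (ε * (1 - ε)) := by
    rw [intervalIntegral.integral_comp_sub_left (fun t ↦ t ^ (-ε) / ε), sub_self,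
      intervalIntegral.integral_div, integral_rpow (Or.inl (by linarith)), neg_add_eq_sub,
      Real.zero_rpow (by linarith), sub_zero, div_div, mul_comm (1 - ε)]
  rw [setLIntegral_congr Ioo_ae_eq_Ioc, ← ofReal_integral_eq_lintegral_ofReal
      ((intervalIntegrable_iff_integrableOn_Ioc_of_le hcd).1 hint)
      (ae_restrict_of_forall_mem measurableSet_Ioc fun x hx ↦
        div_nonneg (Real.rpow_nonneg (sub_nonneg.2 hx.2) _) hε.le),
    ← intervalIntegral.integral_of_le hcd, heval]

lemma fractionalInteraction_Ioo_Ici {c d : ℝ} (hε : 0 < ε) (hε1 : ε < 1) (hcd : c ≤ d) :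
    fractionalInteraction ε (Ioo c d) (Ici d) =
      ENNReal.ofReal ((d - c) ^ (1 - ε) / (ε * (1 - ε))) := by
  rw [fractionalInteraction, ← lintegral_Ioo_sub_rpow_neg_div hε hε1 hcd]
  exact setLIntegral_congr_fun measurableSet_Ioo fun x hx ↦
    lintegral_Ici_inv_abs_sub_rpow hε hx.2

lemma fractionalInteraction_Ioo_Iic {c d : ℝ} (hε : 0 < ε) (hε1 : ε < 1) (hcd : c ≤ d) :
    fractionalInteraction ε (Ioo c d) (Iic c) =
      ENNReal.ofReal ((d - c) ^ (1 - ε) / (ε * (1 - ε))) := by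
  rw [← fractionalInteraction_neg_neg, neg_Ioo, neg_Iic,
    fractionalInteraction_Ioo_Ici hε hε1 (neg_le_neg hcd), neg_sub_neg]

lemma fractionalInteraction_Ioo_compl_le {c d : ℝ} (hε : 0 < ε) (hε1 : ε < 1) (hcd : c ≤ d) :
    fractionalInteraction ε (Ioo c d) (Ioo c d)ᶜ ≤
      2 * ENNReal.ofReal ((d - c) ^ (1 - ε) / (ε * (1 - ε))) := by
  calc fractionalInteraction ε (Ioo c d) (Ioo c d)ᶜ
      = fractionalInteraction ε (Iic c ∪ Ici d) (Ioo c d) := by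
        rw [fractionalInteraction_comm, ← Ioi_inter_Iio, compl_inter, compl_Ioi, compl_Iio]
    _ ≤ fractionalInteraction ε (Iic c) (Ioo c d) + fractionalInteraction ε (Ici d) (Ioo c d) :=
        lintegral_union_le _ _ _
    _ = 2 * ENNReal.ofReal ((d - c) ^ (1 - ε) / (ε * (1 - ε))) := by
        rw [fractionalInteraction_comm ε (Iic c), fractionalInteraction_comm ε (Ici d),
          fractionalInteraction_Ioo_Iic hε hε1 hcd, fractionalInteraction_Ioo_Ici hε hε1 hcd,
          two_mul]

theorem gagliardoSeminorm_indicator_one_le_tsum {ι : Type*} [Countable ι] {s Ω : Set ℝ}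
    {c d : ι → ℝ} (hε : 0 < ε) (hε1 : ε < 1) (hs : MeasurableSet s) (hΩ : MeasurableSet Ω)
    (hcd : ∀ i, c i ≤ d i) (hdisj : ∀ i, Disjoint s (Ioo (c i) (d i)))
    (hcover : Ω \ s ⊆ ⋃ i, Ioo (c i) (d i)) :
    gagliardoSeminorm ε Ω (s.indicator fun _ ↦ 1) ≤
      4 * ∑' i, ENNReal.ofReal ((d i - c i) ^ (1 - ε) / (ε * (1 - ε))) := by
  calc gagliardoSeminorm ε Ω (s.indicator fun _ ↦ 1)
      = 2 * fractionalInteraction ε (Ω \ s) (Ω ∩ s) := by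
        rw [gagliardoSeminorm_indicator_one hs hΩ, fractionalInteraction_comm]
    _ ≤ 2 * ∑' i, fractionalInteraction ε (Ioo (c i) (d i)) (Ω ∩ s) := by
        gcongr
        exact (fractionalInteraction_mono hcover subset_rfl).trans
          (fractionalInteraction_iUnion_left_le _ _)
    _ ≤ 2 * ∑' i, 2 * ENNReal.ofReal ((d i - c i) ^ (1 - ε) / (ε * (1 - ε))) := by
        gcongr with i
        exact (fractionalInteraction_mono subset_rfl
          (inter_subset_right.trans (hdisj i).subset_compl_right)).trans
          (fractionalInteraction_Ioo_compl_le hε hε1 (hcd i))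
    _ = 4 * ∑' i, ENNReal.ofReal ((d i - c i) ^ (1 - ε) / (ε * (1 - ε))) := by
        rw [ENNReal.tsum_mul_left, ← mul_assoc]
        norm_num

end Gagliardo

section Cantor

variable {α : ℝ}

lemma cantorLen_succ (α : ℝ) (n : ℕ) :
    cantorLen α (n + 1) = (cantorLen α n - α ^ (n + 1)) / 2 := rfl

lemma two_mul_cantorLen_succ_le (hα0 : 0 ≤ α) (n : ℕ) :
    2 * cantorLen α (n + 1) ≤ cantorLen α n := by
  rw [cantorLen_succ]
  linarith [pow_nonneg hα0 (n + 1)]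

lemma pow_le_cantorLen (hα0 : 0 ≤ α) (hα : α ≤ 1 / 3) (n : ℕ) : α ^ n ≤ cantorLen α n := by
  induction n with
  | zero => simp [cantorLen]
  | succ n ih =>
    have hpow : α ^ (n + 1) ≤ α ^ n / 3 := by
      rw [pow_succ, div_eq_mul_one_div]
      gcongr
    rw [cantorLen_succ]
    linarith

lemma cantorLen_nonneg (hα0 : 0 ≤ α) (hα : α ≤ 1 / 3) (n : ℕ) : 0 ≤ cantorLen α n :=
  (pow_nonneg hα0 n).trans (pow_le_cantorLen hα0 hα n)

lemma encard_cantorLeft_le (α : ℝ) (n : ℕ) : (cantorLeft α n).encard ≤ 2 ^ n := by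
  induction n with
  | zero => simp [cantorLeft]
  | succ n ih =>
    calc (cantorLeft α (n + 1)).encard
        ≤ (cantorLeft α n).encard + (cantorLeft α n).encard :=
          (encard_union_le _ _).trans (add_le_add_right (encard_image_le _ _) _)
      _ ≤ 2 ^ (n + 1) := by
          rw [pow_succ, mul_two]
          gcongr

lemma finite_cantorLeft (α : ℝ) (n : ℕ) : (cantorLeft α n).Finite :=
  finite_of_encard_le_coe (k := 2 ^ n) (by exact_mod_cast encard_cantorLeft_le α n)

lemma add_cantorLen_le_of_lt (hα0 : 0 ≤ α) (hα : α ≤ 1 / 3) {n : ℕ} {a b : ℝ}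
    (ha : a ∈ cantorLeft α n) (hb : b ∈ cantorLeft α n) (hab : a < b) :
    a + cantorLen α n ≤ b := by
  induction n generalizing a b with
  | zero => exact absurd (ha.trans hb.symm) hab.ne
  | succ n ih =>
    have hhalf := two_mul_cantorLen_succ_le hα0 n
    have hnonneg := cantorLen_nonneg hα0 hα (n + 1)
    -- Both children of an interval lie inside it, and the right one starts after the left one ends.
    rcases ha with ha | ⟨a, ha, rfl⟩ <;> rcases hb with hb | ⟨b, hb, rfl⟩ <;>
      rcases lt_trichotomy a b with h | rfl | h <;>
      first
      | linarith [ih ha hb h]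
      | linarith [ih hb ha h]
      | linarith

/-- The closed set `C_n` of the construction, the union of the intervals of generation `n`. -/
noncomputable def cantorStage (α : ℝ) (n : ℕ) : Set ℝ :=
  ⋃ a ∈ cantorLeft α n, Icc a (a + cantorLen α n)

/-- The open interval removed from the generation-`n` interval with left endpoint `a`. -/
noncomputable def cantorGap (α : ℝ) (n : ℕ) (a : ℝ) : Set ℝ :=
  Ioo (a + cantorLen α (n + 1)) (a + cantorLen α n - cantorLen α (n + 1))

lemma measurableSet_fatCantor (α : ℝ) : MeasurableSet (fatCantor α) :=
  .iInter fun n ↦ (finite_cantorLeft α n).measurableSet_biUnion fun _ _ ↦ measurableSet_Icc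

lemma fatCantor_subset_cantorStage (α : ℝ) (n : ℕ) : fatCantor α ⊆ cantorStage α n :=
  iInter_subset _ n

lemma cantorStage_zero (α : ℝ) : cantorStage α 0 = Icc 0 1 := by
  simp [cantorStage, cantorLeft, cantorLen]

lemma cantorStage_sdiff_succ_subset (α : ℝ) (n : ℕ) :
    cantorStage α n \ cantorStage α (n + 1) ⊆ ⋃ a ∈ cantorLeft α n, cantorGap α n a := by
  rintro x ⟨hx, hx_succ⟩
  obtain ⟨a, ha, hax⟩ := mem_iUnion₂.1 hx
  refine mem_iUnion₂.2 ⟨a, ha, ?_, ?_⟩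
  · by_contra! hle
    exact hx_succ (mem_iUnion₂.2 ⟨a, .inl ha, hax.1, hle⟩)
  · by_contra! hle
    exact hx_succ (mem_iUnion₂.2 ⟨_, .inr ⟨a, ha, rfl⟩, hle, by simpa using hax.2⟩)

lemma Icc_sdiff_fatCantor_subset (α : ℝ) :
    Icc 0 1 \ fatCantor α ⊆ ⋃ p : Σ n, cantorLeft α n, cantorGap α p.1 p.2 := by
  rintro x ⟨hx, hxC⟩
  by_contra hgap
  refine hxC (mem_iInter.2 fun n ↦ ?_)
  change x ∈ cantorStage α n
  induction n with
  | zero => rwa [cantorStage_zero]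
  | succ n ih =>
    by_contra hx_succ
    obtain ⟨a, ha, hxa⟩ := mem_iUnion₂.1 (cantorStage_sdiff_succ_subset α n ⟨ih, hx_succ⟩)
    exact hgap (mem_iUnion.2 ⟨⟨n, a, ha⟩, hxa⟩)

lemma disjoint_cantorStage_succ_cantorGap (hα0 : 0 ≤ α) (hα : α ≤ 1 / 3) {n : ℕ} {a : ℝ}
    (ha : a ∈ cantorLeft α n) : Disjoint (cantorStage α (n + 1)) (cantorGap α n a) := by
  rw [Set.disjoint_left]
  rintro x hx ⟨hax, hxa⟩
  obtain ⟨b, hb, hbx, hxb⟩ := mem_iUnion₂.1 hx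
  have hnonneg := cantorLen_nonneg hα0 hα (n + 1)
  rcases hb with hb | ⟨b, hb, rfl⟩ <;> rcases lt_trichotomy a b with h | rfl | h <;>
    first
    | linarith [add_cantorLen_le_of_lt hα0 hα ha hb h]
    | linarith [add_cantorLen_le_of_lt hα0 hα hb ha h]
    | linarith

lemma tsum_cantorLeft_le (α : ℝ) (f : ℕ → ℝ≥0∞) :
    ∑' p : Σ n, cantorLeft α n, f p.1 ≤ ∑' n, 2 ^ n * f n := by
  rw [ENNReal.tsum_sigma fun n (_ : cantorLeft α n) ↦ f n]
  gcongr with n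
  rw [ENNReal.tsum_const]
  gcongr
  exact_mod_cast ENat.toENNReal_mono (encard_cantorLeft_le α n)

end Cantor

lemma two_mul_rpow_one_sub_lt_one {α ε : ℝ} (hα0 : 0 < α) (hα1 : α < 1)
    (hε : ε < 1 + Real.log 2 / Real.log α) : 2 * α ^ (1 - ε) < 1 := by
  have hlog : Real.log α < 0 := Real.log_neg hα0 hα1
  have hpos : 0 < α ^ (1 - ε) := Real.rpow_pos_of_pos hα0 _
  rw [← Real.log_neg_iff (by positivity), Real.log_mul two_ne_zero hpos.ne', Real.log_rpow hα0]
  have h : Real.log 2 / Real.log α * Real.log α < (ε - 1) * Real.log α :=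
    mul_lt_mul_of_neg_right (by linarith) hlog
  rw [div_mul_cancel₀ _ hlog.ne] at h
  linarith

lemma summable_two_pow_mul_pow_rpow {α s : ℝ} (hα : 0 ≤ α) (hs : 2 * α ^ s < 1) :
    Summable fun n : ℕ ↦ 2 ^ n * (α ^ (n + 1)) ^ s := by
  have hgeom : (fun n : ℕ ↦ 2 ^ n * (α ^ (n + 1)) ^ s) = fun n ↦ α ^ s * (2 * α ^ s) ^ n := by
    ext n
    rw [← Real.rpow_pow_comm hα]
    ring
  rw [hgeom]
  exact (summable_geometric_of_lt_one (by positivity) hs).mul_left _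

theorem gagliardoSeminorm_fatCantor_le {α ε : ℝ} (hα0 : 0 ≤ α) (hα : α ≤ 1 / 3) (hε : 0 < ε)
    (hε1 : ε < 1) :
    gagliardoSeminorm ε (Ioo 0 1) ((fatCantor α).indicator fun _ ↦ 1) ≤
      4 * ∑' n : ℕ, ENNReal.ofReal (2 ^ n * (α ^ (n + 1)) ^ (1 - ε) / (ε * (1 - ε))) := by
  have : ∀ n, Countable (cantorLeft α n) := fun n ↦ (finite_cantorLeft α n).countable
  have length_gap (n : ℕ) (a : ℝ) :
      a + cantorLen α n - cantorLen α (n + 1) - (a + cantorLen α (n + 1)) = α ^ (n + 1) := by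
    rw [cantorLen_succ]
    ring
  have endpoints_le (p : Σ n, cantorLeft α n) :
      p.2 + cantorLen α (p.1 + 1) ≤ p.2 + cantorLen α p.1 - cantorLen α (p.1 + 1) := by
    linarith [two_mul_cantorLen_succ_le hα0 p.1]
  have disjoint_gap (p : Σ n, cantorLeft α n) : Disjoint (fatCantor α) (cantorGap α p.1 p.2) :=
    (disjoint_cantorStage_succ_cantorGap hα0 hα p.2.2).mono_left (fatCantor_subset_cantorStage α _)
  have hcover := (sdiff_subset_sdiff_left Ioo_subset_Icc_self).trans (Icc_sdiff_fatCantor_subset α)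
  calc gagliardoSeminorm ε (Ioo 0 1) ((fatCantor α).indicator fun _ ↦ 1)
      ≤ 4 * ∑' p : Σ n, cantorLeft α n,
          ENNReal.ofReal ((α ^ (p.1 + 1)) ^ (1 - ε) / (ε * (1 - ε))) := by
        simpa only [length_gap] using gagliardoSeminorm_indicator_one_le_tsum hε hε1
          (measurableSet_fatCantor α) measurableSet_Ioo endpoints_le disjoint_gap hcover
    _ ≤ 4 * ∑' n : ℕ, 2 ^ n * ENNReal.ofReal ((α ^ (n + 1)) ^ (1 - ε) / (ε * (1 - ε))) := by
        gcongr
        exact tsum_cantorLeft_le α _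
    _ = 4 * ∑' n : ℕ, ENNReal.ofReal (2 ^ n * (α ^ (n + 1)) ^ (1 - ε) / (ε * (1 - ε))) := by
        simp_rw [mul_div_assoc, ENNReal.ofReal_mul (pow_nonneg zero_le_two _),
          ENNReal.ofReal_pow zero_le_two, ENNReal.ofReal_ofNat]

/-- For `α ∈ (0, 1/3)` and `ε ∈ (0, 1 + ln 2 / ln α)`, the characteristic function of the
fat Cantor set `𝒞_α` has finite Gagliardo `W^{ε,1}` seminorm on `(0,1)`. -/
theorem stmt_14 (α : ℝ) (hα : α ∈ Set.Ioo (0:ℝ) (1/3)) (ε : ℝ)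
    (hε : ε ∈ Set.Ioo (0:ℝ) (1 + Real.log 2 / Real.log α)) :
    (∫⁻ x in Set.Ioo (0:ℝ) 1, ∫⁻ y in Set.Ioo (0:ℝ) 1,
      ENNReal.ofReal
        (|Set.indicator (fatCantor α) (fun _ => (1:ℝ)) x -
            Set.indicator (fatCantor α) (fun _ => (1:ℝ)) y| / |x - y| ^ (1 + ε))) < ⊤ := by
  have hα1 : α < 1 := hα.2.trans (by norm_num)
  have hε1 : ε < 1 := hε.2.trans (add_lt_of_neg_right _
    (div_neg_of_pos_of_neg (Real.log_pos one_lt_two) (Real.log_neg hα.1 hα1)))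
  have hsum : Summable fun n : ℕ ↦ 2 ^ n * (α ^ (n + 1)) ^ (1 - ε) / (ε * (1 - ε)) :=
    (summable_two_pow_mul_pow_rpow hα.1.le
      (two_mul_rpow_one_sub_lt_one hα.1 hα1 hε.2)).div_const _
  exact (gagliardoSeminorm_fatCantor_le hα.1.le hα.2.le hε.1 hε1).trans_lt
    (ENNReal.mul_lt_top (by finiteness) hsum.tsum_ofReal_lt_top)
end
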